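/- arXiv:1312.7241 — 2 statements merged into one kernel-verified Lean document; each statement's English description precedes it below -/
import Mathlib

section
/- Let f be a C^∞ function on an open interval J with f > 0 and f' > 0 on J, so that t ↦ f(t)² is a diffeomorphism of J onto an open interval I, and let y be a C^∞ function on I such that f'(t)² = y(f(t)²) for all t ∈ J. Then B₄[f] = 0 on J if and only if 4·y(x)·y''(x) - y'(x)² = 20·y(x) - 16x² + 32x - 11 for all x ∈ I. -/
/-!
With `x = f²`, the relation `f'² = y(x)` and `f' > 0` say `f' = √(y(f²))`. Hence `f''` and `f'''`
exist as soon as `y` is twice differentiable, and the chain rule gives `f'' = f y'(x)` and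
`f''' = f' (y'(x) + 2 x y''(x))`. On substituting these into `B₄`, the terms `±2 y y' / x` cancel,
leaving the pointwise identity `6 B₄[f] = 4 y y'' - y'² - (20 y - 16 x² + 32 x - 11)`.
-/

open Real

/-- `ρ_i = f⁽ⁱ⁾/f`, the ratio of the `i`-th derivative of `f` to `f`. -/
noncomputable def rho (f : ℝ → ℝ) (i : ℕ) (t : ℝ) : ℝ := iteratedDeriv i f t / f t

/-- The component `B₁ = B₂` of the Bach tensor of the cohomogeneity-one metric `g(f)`. -/
noncomputable def B1 (f : ℝ → ℝ) (t : ℝ) : ℝ :=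
  (-(rho f 4 t) + rho f 1 t * rho f 3 t + 2 * (rho f 2 t) ^ 2 - (rho f 1 t) ^ 2 * rho f 2 t
    + 20 * (f t) ^ 2 * rho f 2 t + 20 * (f t) ^ 2 * (rho f 1 t) ^ 2
    - 48 * (f t) ^ 4 + 64 * (f t) ^ 2 - 11) / 6

/-- The component `B₂` of the Bach tensor of the cohomogeneity-one metric `g(f)`. -/
noncomputable def B2 (f : ℝ → ℝ) (t : ℝ) : ℝ :=
  (-(rho f 4 t) + rho f 1 t * rho f 3 t + 2 * (rho f 2 t) ^ 2 - (rho f 1 t) ^ 2 * rho f 2 t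
    + 20 * (f t) ^ 2 * rho f 2 t + 20 * (f t) ^ 2 * (rho f 1 t) ^ 2
    - 48 * (f t) ^ 4 + 64 * (f t) ^ 2 - 11) / 6

/-- The component `B₃` of the Bach tensor of the cohomogeneity-one metric `g(f)`. -/
noncomputable def B3 (f : ℝ → ℝ) (t : ℝ) : ℝ :=
  (2 * rho f 4 t - 4 * rho f 1 t * rho f 3 t - 3 * (rho f 2 t) ^ 2
    + 4 * (rho f 1 t) ^ 2 * rho f 2 t - 40 * (f t) ^ 2 * rho f 2 t
    - 20 * (f t) ^ 2 * (rho f 1 t) ^ 2 + 80 * (f t) ^ 4 - 96 * (f t) ^ 2 + 11) / 6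

/-- The component `B₄` of the Bach tensor of the cohomogeneity-one metric `g(f)`. -/
noncomputable def B4 (f : ℝ → ℝ) (t : ℝ) : ℝ :=
  (2 * rho f 1 t * rho f 3 t - (rho f 2 t) ^ 2 - 2 * (rho f 1 t) ^ 2 * rho f 2 t
    - 20 * (f t) ^ 2 * (rho f 1 t) ^ 2 + 16 * (f t) ^ 4 - 32 * (f t) ^ 2 + 11) / 6

open Filter Topology

section LocalIdentities

variable {f y g : ℝ → ℝ} {t f' : ℝ}

lemma hasDerivAt_comp_sq (hf : HasDerivAt f f' t) (hg : DifferentiableAt ℝ g (f t ^ 2)) :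
    HasDerivAt (fun s => g (f s ^ 2)) (deriv g (f t ^ 2) * (2 * f t * f')) t := by
  have hsq : HasDerivAt (fun s => f s ^ 2) (2 * f t * f') t := by
    simpa using hf.fun_pow 2
  exact hg.hasDerivAt.comp t hsq

lemma hasDerivAt_mul_comp_sq (hf : HasDerivAt f f' t) (hg : DifferentiableAt ℝ g (f t ^ 2)) :
    HasDerivAt (fun s => f s * g (f s ^ 2))
      (f' * (g (f t ^ 2) + 2 * f t ^ 2 * deriv g (f t ^ 2))) t := by
  refine (hf.fun_mul (hasDerivAt_comp_sq hf hg)).congr_deriv ?_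
  ring

lemma hasDerivAt_deriv_of_deriv_sq_eq (hpos : ∀ᶠ s in 𝓝 t, 0 < deriv f s)
    (hrel : ∀ᶠ s in 𝓝 t, deriv f s ^ 2 = y (f s ^ 2)) (hy : DifferentiableAt ℝ y (f t ^ 2)) :
    HasDerivAt (deriv f) (f t * deriv y (f t ^ 2)) t := by
  have hderiv_eq : deriv f =ᶠ[𝓝 t] fun s => √(y (f s ^ 2)) := by
    filter_upwards [hpos, hrel] with s hs hrel_s
    rw [← hrel_s, Real.sqrt_sq hs.le]
  have hf't : deriv f t ≠ 0 := hpos.self_of_nhds.ne'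
  have hyt : y (f t ^ 2) ≠ 0 := hrel.self_of_nhds ▸ pow_ne_zero 2 hf't
  have hf : HasDerivAt f (deriv f t) t := (differentiableAt_of_deriv_ne_zero hf't).hasDerivAt
  refine (((hasDerivAt_comp_sq hf hy).sqrt hyt).congr_of_eventuallyEq hderiv_eq).congr_deriv ?_
  rw [show √(y (f t ^ 2)) = deriv f t from hderiv_eq.self_of_nhds.symm]
  field_simp

lemma six_mul_B4_eq (hf : f t ≠ 0) (h₁ : deriv f t ^ 2 = y (f t ^ 2))
    (h₂ : deriv (deriv f) t = f t * deriv y (f t ^ 2))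
    (h₃ : deriv (deriv (deriv f)) t =
      deriv f t * (deriv y (f t ^ 2) + 2 * f t ^ 2 * deriv (deriv y) (f t ^ 2))) :
    6 * B4 f t =
      4 * y (f t ^ 2) * deriv (deriv y) (f t ^ 2) - deriv y (f t ^ 2) ^ 2
        - (20 * y (f t ^ 2) - 16 * (f t ^ 2) ^ 2 + 32 * f t ^ 2 - 11) := by
  simp only [B4, rho, iteratedDeriv_succ, iteratedDeriv_zero]
  rw [h₃, h₂, ← h₁]
  field_simp
  ring

end LocalIdentities

theorem bach_flat_change_of_variables_general {I J : Set ℝ} {f y : ℝ → ℝ} (hJ : IsOpen J)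
    (hy : ∀ x ∈ I, DifferentiableAt ℝ y x) (hy' : ∀ x ∈ I, DifferentiableAt ℝ (deriv y) x)
    (hf : ∀ t ∈ J, f t ≠ 0) (hf' : ∀ t ∈ J, 0 < deriv f t)
    (himage : (fun t => f t ^ 2) '' J = I)
    (hrel : ∀ t ∈ J, deriv f t ^ 2 = y (f t ^ 2)) :
    (∀ t ∈ J, B4 f t = 0) ↔
      ∀ x ∈ I, 4 * y x * deriv (deriv y) x - deriv y x ^ 2
        = 20 * y x - 16 * x ^ 2 + 32 * x - 11 := by
  subst himage
  rw [Set.forall_mem_image] at hy hy' ⊢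
  have hsecond (t : ℝ) (ht : t ∈ J) : HasDerivAt (deriv f) (f t * deriv y (f t ^ 2)) t :=
    have hmem : ∀ᶠ s in 𝓝 t, s ∈ J := hJ.mem_nhds ht
    hasDerivAt_deriv_of_deriv_sq_eq (hmem.mono hf') (hmem.mono hrel) (hy ht)
  refine forall₂_congr fun t ht => ?_
  have hfirst : HasDerivAt f (deriv f t) t :=
    (differentiableAt_of_deriv_ne_zero (hf' t ht).ne').hasDerivAt
  have hsecond_near : deriv (deriv f) =ᶠ[𝓝 t] fun s => f s * deriv y (f s ^ 2) :=
    eventually_of_mem (hJ.mem_nhds ht) fun s hs => (hsecond s hs).deriv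
  have hthird : HasDerivAt (deriv (deriv f))
      (deriv f t * (deriv y (f t ^ 2) + 2 * f t ^ 2 * deriv (deriv y) (f t ^ 2))) t :=
    (hasDerivAt_mul_comp_sq hfirst (hy' ht)).congr_of_eventuallyEq hsecond_near
  have hB4 := six_mul_B4_eq (hf t ht) (hrel t ht) (hsecond t ht).deriv hthird.deriv
  constructor <;> intro h <;> linarith

/-- Change of variables `x = f²`, `y = (f')²` transforms the Bach-flat equation
`B₄[f] = 0` into `4yy'\'''\'' - (y'\'')² = 20y - 16x² + 32x - 11`. -/
theorem bach_flat_change_of_variables (a b c d : ℝ) (f y : ℝ → ℝ)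
    (hf : ContDiff ℝ (⊤ : ℕ∞) f) (hy : ContDiff ℝ (⊤ : ℕ∞) y)
    (hpos : ∀ t ∈ Set.Ioo a b, 0 < f t)
    (hderiv_pos : ∀ t ∈ Set.Ioo a b, 0 < deriv f t)
    (hmaps : Set.MapsTo (fun t => (f t) ^ 2) (Set.Ioo a b) (Set.Ioo c d))
    (hsurj : Set.SurjOn (fun t => (f t) ^ 2) (Set.Ioo a b) (Set.Ioo c d))
    (hrel : ∀ t ∈ Set.Ioo a b, (deriv f t) ^ 2 = y ((f t) ^ 2)) :
    (∀ t ∈ Set.Ioo a b, B4 f t = 0) ↔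
      (∀ x ∈ Set.Ioo c d,
        4 * y x * deriv (deriv y) x - (deriv y x) ^ 2
          = 20 * y x - 16 * x ^ 2 + 32 * x - 11) := by
  have hy' : ContDiff ℝ (⊤ : ℕ∞) (deriv y) := (contDiff_infty_iff_deriv.mp hy).2
  exact bach_flat_change_of_variables_general isOpen_Ioo
    (fun _ _ => hy.differentiable (by simp) _) (fun _ _ => hy'.differentiable (by simp) _)
    (fun t ht => (hpos t ht).ne') hderiv_pos (hsurj.image_eq_of_mapsTo hmaps) hrel
end

section
/- Let f be a C^∞ positive function on an open interval satisfying f''(t) = 2f(t)³ - 2f(t) and f'(t)² = f(t)⁴ - 2f(t)² + 7/12 for all t. Then B₄[f] vanishes identically; that is, f is a particular solution of the Bach-flat equation B₄ = 0. -/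
/-!
Differentiating `f'' = 2f³ - 2f` gives `f''' = (6f² - 2) f'`, so `ρ₂ = 2f² - 2` and
`ρ₃ = (6f² - 2) ρ₁`. In `6 B₄` the terms containing `ρ₁` then collapse to `-12 f² ρ₁² = -12 f'²`,
and the remaining ones sum to `12 f⁴ - 24 f² + 7`. So along any solution of the ODE, `B₄` is an
affine function of the first integral `f'² - f⁴ + 2f²`, and it vanishes exactly at the level `7/12`.
-/

open Real

open scoped Topology

theorem iteratedDeriv_three_of_deriv_deriv_eventuallyEq_comp {𝕜 : Type*}
    [NontriviallyNormedField 𝕜] {f g : 𝕜 → 𝕜} {g' t : 𝕜} (hg : HasDerivAt g g' (f t))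
    (hf : DifferentiableAt 𝕜 f t) (hode : deriv (deriv f) =ᶠ[𝓝 t] g ∘ f) :
    iteratedDeriv 3 f t = g' * deriv f t :=
  calc
    iteratedDeriv 3 f t = deriv (deriv (deriv f)) t := by
      simp only [iteratedDeriv_succ, iteratedDeriv_zero]
    _ = deriv (g ∘ f) t := hode.deriv_eq
    _ = g' * deriv f t := (hg.comp t hf.hasDerivAt).deriv

theorem hasDerivAt_two_mul_cube_sub_two_mul (x : ℝ) :
    HasDerivAt (fun y : ℝ ↦ 2 * y ^ 3 - 2 * y) (6 * x ^ 2 - 2) x :=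
  (((hasDerivAt_pow 3 x).const_mul 2).sub ((hasDerivAt_id' x).const_mul 2)).congr_deriv
    (by norm_num; ring)

section CubicODE

variable {f : ℝ → ℝ} {t : ℝ}

theorem rho_two_of_deriv_deriv_eq (hne : f t ≠ 0)
    (hode : deriv (deriv f) t = 2 * f t ^ 3 - 2 * f t) : rho f 2 t = 2 * f t ^ 2 - 2 := by
  rw [rho, iteratedDeriv_succ, iteratedDeriv_one, hode]
  field_simp

theorem rho_three_of_deriv_deriv_eventuallyEq (hf : DifferentiableAt ℝ f t)
    (hode : deriv (deriv f) =ᶠ[𝓝 t] fun s ↦ 2 * f s ^ 3 - 2 * f s) :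
    rho f 3 t = (6 * f t ^ 2 - 2) * rho f 1 t := by
  rw [rho, rho, iteratedDeriv_one, iteratedDeriv_three_of_deriv_deriv_eventuallyEq_comp
    (hasDerivAt_two_mul_cube_sub_two_mul (f t)) hf hode, mul_div_assoc]

theorem B4_eq_of_deriv_deriv_eventuallyEq (hf : DifferentiableAt ℝ f t) (hne : f t ≠ 0)
    (hode : deriv (deriv f) =ᶠ[𝓝 t] fun s ↦ 2 * f s ^ 3 - 2 * f s) :
    B4 f t = 7 / 6 - 2 * (deriv f t ^ 2 - f t ^ 4 + 2 * f t ^ 2) := by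
  have mul_rho_one : f t * rho f 1 t = deriv f t := by
    rw [rho, iteratedDeriv_one, mul_div_cancel₀ _ hne]
  calc
    B4 f t = 7 / 6 - 2 * ((f t * rho f 1 t) ^ 2 - f t ^ 4 + 2 * f t ^ 2) := by
      rw [B4, rho_two_of_deriv_deriv_eq hne hode.eq_of_nhds,
        rho_three_of_deriv_deriv_eventuallyEq hf hode]
      ring
    _ = 7 / 6 - 2 * (deriv f t ^ 2 - f t ^ 4 + 2 * f t ^ 2) := by rw [mul_rho_one]

end CubicODE

theorem bach_flat_particular_solution_one_general {f : ℝ → ℝ} {s : Set ℝ} (hs : IsOpen s)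
    (hf : DifferentiableOn ℝ f s) (hne : ∀ t ∈ s, f t ≠ 0)
    (hode : ∀ t ∈ s, deriv (deriv f) t = 2 * f t ^ 3 - 2 * f t) :
    ∀ t ∈ s, B4 f t = 0 ↔ deriv f t ^ 2 = f t ^ 4 - 2 * f t ^ 2 + 7 / 12 := by
  intro t ht
  have hst : s ∈ 𝓝 t := hs.mem_nhds ht
  rw [B4_eq_of_deriv_deriv_eventuallyEq (hf.differentiableAt hst) (hne t ht)
    (Filter.eventually_of_mem hst hode)]
  constructor <;> intro <;> linarith

/-- The particular solution `(f')² = f⁴ - 2f² + 7/12` of the Bach-flat equation. -/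
theorem bach_flat_particular_solution_one (a b : ℝ) (f : ℝ → ℝ)
    (hf : ContDiff ℝ (⊤ : ℕ∞) f) (hpos : ∀ t ∈ Set.Ioo a b, 0 < f t)
    (hode : ∀ t ∈ Set.Ioo a b, deriv (deriv f) t = 2 * (f t) ^ 3 - 2 * f t)
    (hfi : ∀ t ∈ Set.Ioo a b, (deriv f t) ^ 2 = (f t) ^ 4 - 2 * (f t) ^ 2 + 7 / 12) :
    ∀ t ∈ Set.Ioo a b, B4 f t = 0 :=
  fun t ht ↦ (bach_flat_particular_solution_one_general isOpen_Ioo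
    (hf.differentiable (by simp)).differentiableOn (fun s hs ↦ (hpos s hs).ne') hode t ht).mpr
    (hfi t ht)
end
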